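/- Fix 0 < q < 1, 0 < a < q^{−1}, b < q^{−1} and c ∈ ℝ ∖ {0}, and set γ = (1+abq²) − (acq + bq/c). Let h_n = ((abq²;q)_∞/(aq;q)_∞)·((1−abq)(aq)^n/(1−abq^{2n+1}))·((q;q)_n (bq;q)_n)/((aq;q)_n (abq;q)_n) (so h_n > 0), and set φ_n(x) = p_n(x;a,b;q)/√(h_n), φ_{−1} := 0. Then for every n ∈ ℕ and every x ≠ 0: aq(bqx−1)(φ_n(qx) − φ_n(x)) + (x−1)(φ_n(q^{−1}x) − φ_n(x)) + γ x φ_n(x) = a_n^γ φ_{n+1}(x) + b_n^γ φ_n(x) + a_{n−1}^γ φ_{n−1}(x), where a_{−1}^γ := 0, a_n^γ = −(√(aq)·(1−acq^{n+1})(1−bq^{n+1}/c)/(1−abq^{2n+2}))·√((1−q^{n+1})(1−aq^{n+1})(1−bq^{n+1})(1−abq^{n+1})/((1−abq^{2n+1})(1−abq^{2n+3}))), and b_n^γ = (1−acq^{n+1})(1−aq^{n+1})(1−abq^{n+1})(1−bq^{n+1}/c)/((1−abq^{2n+1})(1−abq^{2n+2})) + aq(1−q^n)(1−acq^n)(1−bq^n)(1−bq^n/c)/((1−abq^{2n})(1−abq^{2n+1})).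 -/

import Mathlib

/-- q-shifted factorial `(a;q)_k = ∏_{j=0}^{k-1} (1 - a q^j)`. -/
noncomputable def qPoch (q a : ℝ) (k : ℕ) : ℝ := ∏ j ∈ Finset.range k, (1 - a * q ^ j)

/-- Infinite q-shifted factorial `(a;q)_∞ = ∏_{j=0}^{∞} (1 - a q^j)`. -/
noncomputable def qPochInf (q a : ℝ) : ℝ := ∏' j : ℕ, (1 - a * q ^ j)

/-- Little q-Jacobi polynomial
`p_n(x;a,b;q) = ∑_{k=0}^{n} ((q^{−n};q)_k (abq^{n+1};q)_k)/((aq;q)_k (q;q)_k) (qx)^k`. -/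
noncomputable def littleqJacobi (q a b : ℝ) (n : ℕ) (x : ℝ) : ℝ :=
  ∑ k ∈ Finset.range (n + 1),
    qPoch q (q ^ (-(n : ℤ))) k * qPoch q (a * b * q ^ (n + 1)) k /
      (qPoch q (a * q) k * qPoch q q k) * (q * x) ^ k

lemma qPoch_succ' (q a : ℝ) (k : ℕ) : qPoch q a (k+1) = qPoch q a k * (1 - a * q ^ k) := by
  simp [qPoch, Finset.prod_range_succ]

lemma qPoch_zero' (q a : ℝ) : qPoch q a 0 = 1 := by simp [qPoch]

lemma qPoch_shift (q a : ℝ) (k : ℕ) : qPoch q a (k+1) = (1 - a) * qPoch q (a * q) k := by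
  simp only [qPoch, Finset.prod_range_succ']
  rw [mul_comm]
  simp only [pow_zero, mul_one]
  congr 1
  apply Finset.prod_congr rfl
  intro j _
  ring

/-- coefficients of the little q-Jacobi polynomial -/
noncomputable def lqjCoef (q a b : ℝ) (n k : ℕ) : ℝ :=
  qPoch q (q ^ (-(n : ℤ))) k * qPoch q (a * b * q ^ (n + 1)) k /
      (qPoch q (a * q) k * qPoch q q k) * q ^ k

lemma lqj_eq (q a b : ℝ) (n : ℕ) (x : ℝ) :
    littleqJacobi q a b n x = ∑ k ∈ Finset.range (n+1), lqjCoef q a b n k * x ^ k := by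
  unfold littleqJacobi lqjCoef
  apply Finset.sum_congr rfl
  intro k _
  rw [mul_pow]; ring

lemma lqjCoef_top (q a b : ℝ) (hq : 0 < q) (n : ℕ) : lqjCoef q a b n (n+1) = 0 := by
  unfold lqjCoef
  rw [qPoch_succ' q (q ^ (-(n:ℤ))) n]
  have : q ^ (-(n:ℤ)) * q ^ n = 1 := by
    rw [zpow_neg, zpow_natCast]; exact inv_mul_cancel₀ (by positivity)
  rw [this]; simp

lemma lqj_eq' (q a b : ℝ) (hq : 0 < q) (n : ℕ) (x : ℝ) :
    littleqJacobi q a b n x = ∑ k ∈ Finset.range (n+2), lqjCoef q a b n k * x ^ k := by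
  rw [Finset.sum_range_succ, lqjCoef_top q a b hq, lqj_eq]; simp

lemma lqjCoef_zero (q a b : ℝ) (n : ℕ) : lqjCoef q a b n 0 = 1 := by
  simp [lqjCoef, qPoch]

lemma coef_right (q a b : ℝ) (n j : ℕ) :
    lqjCoef q a b n (j+1) = lqjCoef q a b n j *
      ((1 - (q^n)⁻¹ * q^j) * (1 - a*b*q^(n+1)*q^j) * q / ((1 - a*q*q^j) * (1 - q*q^j))) := by
  unfold lqjCoef
  simp only [qPoch_succ', zpow_neg, zpow_natCast]
  rw [pow_succ q j]
  simp only [div_eq_mul_inv, mul_inv]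
  ring

lemma coef_up (q a b : ℝ) (hq : 0 < q) (n j : ℕ) (hS : 1 - a*b*q^(n+1) ≠ 0) :
    lqjCoef q a b (n+1) (j+1) = lqjCoef q a b n j *
      ((1 - (q^n*q)⁻¹) * ((1 - a*b*q^(n+1)*q^j) * (1 - a*b*q^(n+1)*q^(j+1)) / (1 - a*b*q^(n+1)))
        * q / ((1 - a*q*q^j) * (1 - q*q^j))) := by
  have h1 : qPoch q (q ^ (-((n+1:ℕ):ℤ))) (j+1) = (1 - (q^n*q)⁻¹) * qPoch q (q ^ (-(n:ℤ))) j := by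
    rw [qPoch_shift]
    simp only [zpow_neg, zpow_natCast]
    rw [pow_succ]
    congr 2
    field_simp
  have h2 : qPoch q (a*b*q^(n+1+1)) (j+1) = qPoch q (a*b*q^(n+1)) j *
      ((1 - a*b*q^(n+1)*q^j) * (1 - a*b*q^(n+1)*q^(j+1)) / (1 - a*b*q^(n+1))) := by
    have e : qPoch q (a*b*q^(n+1)) (j+1+1) = (1 - a*b*q^(n+1)) * qPoch q (a*b*q^(n+1+1)) (j+1) := by
      rw [qPoch_shift]; congr 2; ring
    rw [qPoch_succ', qPoch_succ'] at e
    rw [← mul_div_assoc, eq_div_iff hS]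
    linarith
  unfold lqjCoef
  rw [h1, h2]
  simp only [qPoch_succ' q (a*q), qPoch_succ' q q, zpow_neg, zpow_natCast]
  rw [pow_succ q j]
  simp only [div_eq_mul_inv, mul_inv]
  ring

lemma coef_down (q a b : ℝ) (hq : 0 < q) (hq1 : q < 1) (m j : ℕ) :
    lqjCoef q a b m (j+1) = lqjCoef q a b (m+1) j *
      ((1 - a*b*q^(m+1)) * ((1 - (q^(m+1))⁻¹*q^j) * (1 - (q^(m+1))⁻¹*q^(j+1)) / (1 - (q^(m+1))⁻¹))
        * q / ((1 - a*q*q^j) * (1 - q*q^j))) := by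
  have hS : 1 - (q^(m+1))⁻¹ ≠ 0 := by
    have : 1 < (q^(m+1))⁻¹ := (one_lt_inv₀ (by positivity)).2 (pow_lt_one₀ hq.le hq1 (by simp))
    linarith
  have h1 : qPoch q (a*b*q^(m+1)) (j+1) = (1 - a*b*q^(m+1)) * qPoch q (a*b*q^(m+1+1)) j := by
    rw [qPoch_shift]; congr 2; ring
  have h2 : qPoch q (q ^ (-(m:ℤ))) (j+1) = qPoch q (q ^ (-((m+1:ℕ):ℤ))) j *
      ((1 - (q^(m+1))⁻¹*q^j) * (1 - (q^(m+1))⁻¹*q^(j+1)) / (1 - (q^(m+1))⁻¹)) := by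
    have e : qPoch q (q ^ (-((m+1:ℕ):ℤ))) (j+1+1) = (1 - (q^(m+1))⁻¹) * qPoch q (q ^ (-(m:ℤ))) (j+1) := by
      rw [qPoch_shift]
      simp only [zpow_neg, zpow_natCast]
      congr 2
      rw [pow_succ]; field_simp
    rw [qPoch_succ', qPoch_succ'] at e
    simp only [zpow_neg, zpow_natCast] at e ⊢
    rw [← mul_div_assoc, eq_div_iff hS]
    linarith
  unfold lqjCoef
  rw [h1, h2]
  simp only [qPoch_succ' q (a*q), qPoch_succ' q q, zpow_neg, zpow_natCast]
  rw [pow_succ q j]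
  simp only [div_eq_mul_inv, mul_inv]
  ring

lemma core (q a b c Q y : ℝ) (hq : q ≠ 0) (hc : c ≠ 0) (hQ : Q ≠ 0) (hy : y ≠ 0)
    (hQ1 : Q - 1 ≠ 0)
    (h1 : 1 - a*q*y ≠ 0) (h2 : 1 - q*y ≠ 0)
    (h3 : 1 - a*b*Q*q ≠ 0) (h4 : 1 - a*b*Q^2 ≠ 0) (h5 : 1 - a*b*Q^2*q ≠ 0)
    (h6 : 1 - a*b*Q^2*q^2 ≠ 0) :
    (a*q*(1 - q*y) + ((q*y)⁻¹ - 1) * (-1)) *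
        ((1 - Q⁻¹ * y) * (1 - a*b*(Q*q)*y) * q / ((1 - a*q*y) * (1 - q*y)))
      + (a*b*q^2*(y-1) + (y⁻¹ - 1) + ((1 + a * b * q ^ 2) - (a * c * q + b * q / c)))
    = -((1-a*c*(Q*q))*(1-b*(Q*q)/c)*(1-a*(Q*q))*(1-a*b*(Q*q))/((1-a*b*(Q^2*q))*(1-a*b*(Q^2*q^2))))
        * ((1 - (Q*q)⁻¹) * ((1 - a*b*(Q*q)*y) * (1 - a*b*(Q*q)*(y*q)) / (1 - a*b*(Q*q)))
        * q / ((1 - a*q*y) * (1 - q*y)))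
      + ((1-a*c*(Q*q))*(1-b*(Q*q)/c)*(1-a*(Q*q))*(1-a*b*(Q*q))/((1-a*b*(Q^2*q))*(1-a*b*(Q^2*q^2)))
        + a*q*(1-Q)*(1-a*c*Q)*(1-b*Q)*(1-b*Q/c)/((1-a*b*Q^2)*(1-a*b*(Q^2*q))))
        * ((1 - Q⁻¹ * y) * (1 - a*b*(Q*q)*y) * q / ((1 - a*q*y) * (1 - q*y)))
      - (a*q*(1-Q)*(1-a*c*Q)*(1-b*Q)*(1-b*Q/c)/((1-a*b*Q^2)*(1-a*b*(Q^2*q))))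
        * ((1 - a*b*Q) * ((1 - Q⁻¹*y) * (1 - Q⁻¹*(y*q)) / (1 - Q⁻¹))
        * q / ((1 - a*q*y) * (1 - q*y))) := by
  have e1 : (1 - Q⁻¹) = (Q-1)/Q := by field_simp
  rw [e1]
  have g3 : 1 - a*b*(Q*q) ≠ 0 := by rwa [← mul_assoc]
  have g5 : 1 - a*b*(Q^2*q) ≠ 0 := by rwa [← mul_assoc]
  have g6 : 1 - a*b*(Q^2*q^2) ≠ 0 := by rwa [← mul_assoc]
  have e0 : 1 - a*b*Q^2 = 1 - a*b*Q^2 := rfl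
  generalize hX3 : 1 - a*b*(Q*q) = X3 at *
  generalize hX4 : 1 - a*b*Q^2 = X4 at *
  generalize hX5 : 1 - a*b*(Q^2*q) = X5 at *
  generalize hX6 : 1 - a*b*(Q^2*q^2) = X6 at *
  generalize hY1 : 1 - a*q*y = Y1 at *
  generalize hY2 : 1 - q*y = Y2 at *
  generalize hZ : Q - 1 = Z at *
  field_simp
  subst hX3 hX4 hX5 hX6 hY1 hY2 hZ
  ring

lemma abq_lt (q a b : ℝ) (hq : 0 < q) (hq1 : q < 1) (ha0 : 0 < a) (haq : a*q < 1) (hbq : b*q < 1)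
    (k : ℕ) : 0 < 1 - a*b*q^(k+2) := by
  have h1 : a*q*(b*q) < 1 := by nlinarith [mul_pos (mul_pos ha0 hq) (sub_pos.2 hbq)]
  have h2 : 0 < q^k := by positivity
  have h3 : q^k ≤ 1 := pow_le_one₀ hq.le hq1.le
  have : a*b*q^(k+2) = (a*q*(b*q)) * q^k := by ring
  rw [this]
  rcases le_or_gt (a*q*(b*q)) 0 with h | h <;> nlinarith

lemma lt_pow (q t : ℝ) (hq : 0 < q) (hq1 : q < 1) (htq : t*q < 1)
    (k : ℕ) : 0 < 1 - t*q^(k+1) := by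
  have h2 : 0 < q^k := by positivity
  have h3 : q^k ≤ 1 := pow_le_one₀ hq.le hq1.le
  have : t*q^(k+1) = (t*q) * q^k := by ring
  rw [this]
  rcases le_or_gt (t*q) 0 with h | h <;> nlinarith

/-- expansion of the operator -/
lemma lhs_expand (q a b γ : ℝ) (hq : 0 < q) (n : ℕ) (x : ℝ) :
    a * q * (b * q * x - 1) * (littleqJacobi q a b n (q * x) - littleqJacobi q a b n x)
        + (x - 1) * (littleqJacobi q a b n (x / q) - littleqJacobi q a b n x)
        + γ * x * littleqJacobi q a b n x
    = ∑ j ∈ Finset.range (n+1),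
        ((a*q*(1 - q*q^j) + ((q*q^j)⁻¹ - 1) * (-1)) * lqjCoef q a b n (j+1)
          + (a*b*q^2*(q^j-1) + ((q^j)⁻¹ - 1) + γ) * lqjCoef q a b n j) * x^(j+1) := by
  have e1 : ∑ j ∈ Finset.range (n+1),
        ((a*q*(1 - q*q^j) + ((q*q^j)⁻¹ - 1) * (-1)) * lqjCoef q a b n (j+1)) * x^(j+1)
      = ∑ j ∈ Finset.range (n+1),
        ((a*q*(1 - q^j) + ((q^j)⁻¹ - 1) * (-1)) * lqjCoef q a b n j) * x^j := by
    have := Finset.sum_range_succ (fun j =>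
      ((a*q*(1 - q^j) + ((q^j)⁻¹ - 1) * (-1)) * lqjCoef q a b n j) * x^j) (n+1)
    rw [Finset.sum_range_succ'] at this
    simp only [lqjCoef_top q a b hq n, pow_zero] at this
    simp only [pow_succ'] at this ⊢
    simp at this ⊢
    linarith
  simp only [add_mul _ _ (x^(_+1)), Finset.sum_add_distrib]
  rw [e1]
  simp only [lqj_eq]
  rw [← Finset.sum_sub_distrib, ← Finset.sum_sub_distrib, Finset.mul_sum, Finset.mul_sum,
    Finset.mul_sum, ← Finset.sum_add_distrib, ← Finset.sum_add_distrib, ← Finset.sum_add_distrib]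
  apply Finset.sum_congr rfl
  intro j _
  rw [div_pow, mul_pow, div_eq_mul_inv]
  ring

lemma sum_split (q a b : ℝ) (hq : 0 < q) (n : ℕ) (x : ℝ) :
    littleqJacobi q a b n x = (∑ k ∈ Finset.range (n+1), lqjCoef q a b n (k+1) * x ^ (k+1)) + 1 := by
  rw [lqj_eq' q a b hq, Finset.sum_range_succ', lqjCoef_zero]; simp

lemma sum_split_up (q a b : ℝ) (n : ℕ) (x : ℝ) :
    littleqJacobi q a b (n+1) x
      = (∑ k ∈ Finset.range (n+1), lqjCoef q a b (n+1) (k+1) * x ^ (k+1)) + 1 := by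
  rw [lqj_eq q a b, Finset.sum_range_succ', lqjCoef_zero]; simp

lemma lqjCoef_top2 (q a b : ℝ) (hq : 0 < q) (n : ℕ) : lqjCoef q a b n (n+2) = 0 := by
  rw [coef_right, lqjCoef_top q a b hq]; simp

lemma sum_split_down (q a b : ℝ) (hq : 0 < q) (n : ℕ) (x : ℝ) :
    littleqJacobi q a b n x
      = (∑ k ∈ Finset.range (n+2), lqjCoef q a b n (k+1) * x ^ (k+1)) + 1 := by
  rw [Finset.sum_range_succ, sum_split q a b hq, lqjCoef_top2 q a b hq]; simp

lemma p_rec (q a b c : ℝ) (hq : 0 < q) (hq1 : q < 1)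
    (ha0 : 0 < a) (haq : a*q < 1) (hbq : b*q < 1) (hc : c ≠ 0) (m : ℕ) (x : ℝ) (n : ℕ)
    (hn : n = m+1) (α δ : ℝ)
    (hα : α = (1-a*c*(q^n*q))*(1-b*(q^n*q)/c)*(1-a*(q^n*q))*(1-a*b*(q^n*q))
      /((1-a*b*((q^n)^2*q))*(1-a*b*((q^n)^2*q^2))))
    (hδ : δ = a*q*(1-q^n)*(1-a*c*q^n)*(1-b*q^n)*(1-b*q^n/c)
      /((1-a*b*(q^n)^2)*(1-a*b*((q^n)^2*q)))) :
    a * q * (b * q * x - 1) * (littleqJacobi q a b n (q * x) - littleqJacobi q a b n x)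
        + (x - 1) * (littleqJacobi q a b n (x / q) - littleqJacobi q a b n x)
        + ((1 + a * b * q ^ 2) - (a * c * q + b * q / c)) * x * littleqJacobi q a b n x
    = -α * littleqJacobi q a b (n+1) x + (α + δ) * littleqJacobi q a b n x
      - δ * littleqJacobi q a b m x := by
  rw [lhs_expand q a b _ hq, sum_split q a b hq n, sum_split_up q a b n, sum_split_down q a b hq m]
  have e2 : m + 2 = n + 1 := by omega
  rw [e2]
  have key : ∀ j : ℕ,
      ((a*q*(1 - q*q^j) + ((q*q^j)⁻¹ - 1) * (-1)) * lqjCoef q a b n (j+1)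
          + (a*b*q^2*(q^j-1) + ((q^j)⁻¹ - 1) + ((1 + a * b * q ^ 2) - (a * c * q + b * q / c)))
            * lqjCoef q a b n j) * x^(j+1)
      = -α * (lqjCoef q a b (n+1) (j+1) * x^(j+1)) + (α+δ) * (lqjCoef q a b n (j+1) * x^(j+1))
        - δ * (lqjCoef q a b m (j+1) * x^(j+1)) := by
    intro j
    have hQ : q^n < 1 := pow_lt_one₀ hq.le hq1 (by omega)
    have a1 := lt_pow q a hq hq1 haq j
    have a2 := lt_pow q 1 hq hq1 (by linarith) j
    have a3 := abq_lt q a b hq hq1 ha0 haq hbq m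
    have a4 := abq_lt q a b hq hq1 ha0 haq hbq (2*m)
    have a5 := abq_lt q a b hq hq1 ha0 haq hbq (2*m+1)
    have a6 := abq_lt q a b hq hq1 ha0 haq hbq (2*m+2)
    have w3 : a*b*q^n*q = a*b*q^(m+2) := by rw [hn]; ring
    have w4 : a*b*(q^n)^2 = a*b*q^(2*m+2) := by rw [hn]; ring
    have w5 : a*b*(q^n)^2*q = a*b*q^(2*m+1+2) := by rw [hn]; ring
    have w6 : a*b*(q^n)^2*q^2 = a*b*q^(2*m+2+2) := by rw [hn]; ring
    have C := core q a b c (q^n) (q^j) hq.ne' hc (by positivity) (by positivity) (by linarith)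
      (by rw [mul_assoc, ← pow_succ']; exact a1.ne')
      (by rw [← pow_succ']; simpa using a2.ne')
      (by rw [w3]; exact a3.ne') (by rw [w4]; exact a4.ne') (by rw [w5]; exact a5.ne')
      (by rw [w6]; exact a6.ne')
    rw [← hα, ← hδ] at C
    have D := coef_down q a b hq hq1 m j
    rw [← hn] at D
    have U := coef_up q a b hq n j (by rw [pow_succ, ← mul_assoc, w3]; exact a3.ne')
    have R := coef_right q a b n j
    rw [pow_succ q n, pow_succ q j] at U
    rw [pow_succ q n] at R
    rw [pow_succ q j] at D
    rw [U, R, D]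
    linear_combination (lqjCoef q a b n j * x^(j+1)) * C
  rw [Finset.sum_congr rfl (fun j _ => key j), Finset.sum_sub_distrib, Finset.sum_add_distrib,
    ← Finset.mul_sum, ← Finset.mul_sum, ← Finset.mul_sum]
  ring

lemma p_rec0 (q a b c : ℝ) (hq : 0 < q) (hq1 : q < 1)
    (ha0 : 0 < a) (haq : a*q < 1) (hbq : b*q < 1) (hc : c ≠ 0) (hab : 1 - a*b*q ≠ 0) (x : ℝ)
    (α : ℝ)
    (hα : α = (1-a*c*q)*(1-b*q/c)*(1-a*q)*(1-a*b*q)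
      /((1-a*b*q)*(1-a*b*q^2))) :
    a * q * (b * q * x - 1) * (littleqJacobi q a b 0 (q * x) - littleqJacobi q a b 0 x)
        + (x - 1) * (littleqJacobi q a b 0 (x / q) - littleqJacobi q a b 0 x)
        + ((1 + a * b * q ^ 2) - (a * c * q + b * q / c)) * x * littleqJacobi q a b 0 x
    = -α * littleqJacobi q a b 1 x + α * littleqJacobi q a b 0 x := by
  have h2 : 1 - a*b*q^2 ≠ 0 := (abq_lt q a b hq hq1 ha0 haq hbq 0).ne'
  have h0 : 1 - q ≠ 0 := by linarith
  have h1 : 1 - a*q ≠ 0 := by linarith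
  subst hα
  simp [littleqJacobi, Finset.sum_range_succ, qPoch]
  have : 1 - q⁻¹ = -(1-q)/q := by field_simp; ring
  rw [this]
  field_simp
  ring

/-- ratio of consecutive norms -/
noncomputable def rr (q a b : ℝ) (n : ℕ) : ℝ :=
  a*q*(1-q^(n+1))*(1-b*q^(n+1)) / (1-a*q^(n+1)) * ((1-a*b*q^(2*n+1))/(1-a*b*q^(n+1)))
    / (1-a*b*q^(2*n+3))

noncomputable def GG (q a b : ℝ) (n : ℕ) : ℝ :=
  (1-a*q^(n+1)) * ((1-a*b*q^(n+1)) / (1-a*b*q^(2*n+1)))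

lemma ratio_pos (q a b : ℝ) (hq : 0 < q) (hq1 : q < 1)
    (ha0 : 0 < a) (haq : a*q < 1) (hbq : b*q < 1) (hab : 1 - a*b*q ≠ 0) (n : ℕ) :
    0 < (1-a*b*q^(n+1)) / (1-a*b*q^(2*n+1)) := by
  cases n with
  | zero => simp [hab]
  | succ m =>
    have a1 := abq_lt q a b hq hq1 ha0 haq hbq m
    have a2 := abq_lt q a b hq hq1 ha0 haq hbq (2*m+1)
    exact div_pos a1 a2

lemma rr_pos (q a b : ℝ) (hq : 0 < q) (hq1 : q < 1)
    (ha0 : 0 < a) (haq : a*q < 1) (hbq : b*q < 1) (hab : 1 - a*b*q ≠ 0) (n : ℕ) :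
    0 < rr q a b n := by
  have a0 := inv_pos.2 (ratio_pos q a b hq hq1 ha0 haq hbq hab n)
  rw [inv_div] at a0
  have a1 := lt_pow q a hq hq1 haq n
  have a2 := lt_pow q b hq hq1 hbq n
  have a3 := lt_pow q 1 hq hq1 (by linarith) n
  rw [one_mul] at a3
  have a4 := abq_lt q a b hq hq1 ha0 haq hbq (2*n+1)
  unfold rr
  exact div_pos (mul_pos (div_pos (by positivity) a1) a0) a4

lemma abn_ne (q a b : ℝ) (hq : 0 < q) (hq1 : q < 1)
    (ha0 : 0 < a) (haq : a*q < 1) (hbq : b*q < 1) (hab : 1 - a*b*q ≠ 0) (n : ℕ) :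
    1 - a*b*q^(n+1) ≠ 0 := by
  cases n with
  | zero => simpa using hab
  | succ m => exact (abq_lt q a b hq hq1 ha0 haq hbq m).ne'

lemma sqrt_key (q a b : ℝ) (hq : 0 < q) (hq1 : q < 1)
    (ha0 : 0 < a) (haq : a*q < 1) (hbq : b*q < 1) (hab : 1 - a*b*q ≠ 0) (n : ℕ) :
    Real.sqrt (a*q) * Real.sqrt ((1 - q ^ (n + 1)) * (1 - a * q ^ (n + 1)) * (1 - b * q ^ (n + 1))
            * (1 - a * b * q ^ (n + 1))
            / ((1 - a * b * q ^ (2 * n + 1)) * (1 - a * b * q ^ (2 * n + 3))))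
      = GG q a b n * Real.sqrt (rr q a b n) := by
  have a0 := ratio_pos q a b hq hq1 ha0 haq hbq hab n
  have a1 := lt_pow q a hq hq1 haq n
  have hG : 0 ≤ GG q a b n := (mul_pos a1 a0).le
  rw [← Real.sqrt_mul (by positivity)]
  conv_rhs => rw [← Real.sqrt_sq hG]
  rw [← Real.sqrt_mul (by positivity)]
  congr 1
  unfold GG rr
  have b1 := abn_ne q a b hq hq1 ha0 haq hbq hab n
  have b2 := abn_ne q a b hq hq1 ha0 haq hbq hab (2*n)
  have b3 := abn_ne q a b hq hq1 ha0 haq hbq hab (2*n+2)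
  have b4 := a1.ne'
  rw [show 2*n+2+1 = 2*n+3 from rfl] at b3
  generalize 1 - a*b*q^(n+1) = X1 at *
  generalize 1 - a*b*q^(2*n+1) = X2 at *
  generalize 1 - a*b*q^(2*n+3) = X3 at *
  generalize 1 - a*q^(n+1) = X4 at *
  field_simp

/-- Case one (shift in `a`): the bounded q-difference operator
`T^γ = x(L^{(aq,b)} + γ)`, `γ = (1+abq²) − (acq + bq/c)`, acts tridiagonally on the
orthonormalised little q-Jacobi polynomials `φ_n = p_n(·;a,b;q)/√(h_n)`. -/
theorem stmt_7 (q a b c : ℝ) (hq : 0 < q) (hq1 : q < 1)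
    (ha0 : 0 < a) (ha1 : a < q⁻¹) (hb : b < q⁻¹) (hc : c ≠ 0)
    (γ : ℝ) (hγ : γ = (1 + a * b * q ^ 2) - (a * c * q + b * q / c))
    (h : ℕ → ℝ)
    (hh : ∀ n, h n = qPochInf q (a * b * q ^ 2) / qPochInf q (a * q)
        * ((1 - a * b * q) * (a * q) ^ n / (1 - a * b * q ^ (2 * n + 1)))
        * (qPoch q q n * qPoch q (b * q) n)
        / (qPoch q (a * q) n * qPoch q (a * b * q) n))
    (φ : ℕ → ℝ → ℝ)
    (hφ : ∀ n x, φ n x = littleqJacobi q a b n x / Real.sqrt (h n))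
    (A B : ℕ → ℝ)
    (hA : ∀ n : ℕ, A n =
      -(Real.sqrt (a * q) * (1 - a * c * q ^ (n + 1)) * (1 - b * q ^ (n + 1) / c)
          / (1 - a * b * q ^ (2 * n + 2)))
        * Real.sqrt ((1 - q ^ (n + 1)) * (1 - a * q ^ (n + 1)) * (1 - b * q ^ (n + 1))
            * (1 - a * b * q ^ (n + 1))
            / ((1 - a * b * q ^ (2 * n + 1)) * (1 - a * b * q ^ (2 * n + 3)))))
    (hB : ∀ n : ℕ, B n =
      (1 - a * c * q ^ (n + 1)) * (1 - a * q ^ (n + 1)) * (1 - a * b * q ^ (n + 1))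
          * (1 - b * q ^ (n + 1) / c)
          / ((1 - a * b * q ^ (2 * n + 1)) * (1 - a * b * q ^ (2 * n + 2)))
        + a * q * (1 - q ^ n) * (1 - a * c * q ^ n) * (1 - b * q ^ n) * (1 - b * q ^ n / c)
          / ((1 - a * b * q ^ (2 * n)) * (1 - a * b * q ^ (2 * n + 1)))) :
    ∀ (n : ℕ) (x : ℝ), x ≠ 0 →
      a * q * (b * q * x - 1) * (φ n (q * x) - φ n x)
        + (x - 1) * (φ n (x / q) - φ n x) + γ * x * φ n x
      = A n * φ (n + 1) x + B n * φ n x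
        + (if n = 0 then 0 else A (n - 1) * φ (n - 1) x) := by
  have haq : a*q < 1 := by rwa [lt_inv_comm₀ ha0 hq, ← one_div, lt_div_iff₀ ha0, mul_comm] at ha1
  have hbq : b*q < 1 := by rwa [← one_div, lt_div_iff₀ hq] at hb
  have triv : (∀ n, h n ≤ 0) → ∀ (n : ℕ) (x : ℝ), x ≠ 0 →
      a * q * (b * q * x - 1) * (φ n (q * x) - φ n x)
        + (x - 1) * (φ n (x / q) - φ n x) + γ * x * φ n x
      = A n * φ (n + 1) x + B n * φ n x
        + (if n = 0 then 0 else A (n - 1) * φ (n - 1) x) := by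
    intro hle n x _
    have hz : ∀ n x, φ n x = 0 := by
      intro n x
      rw [hφ, Real.sqrt_eq_zero_of_nonpos (hle n), div_zero]
    simp [hz]
  by_cases hab : 1 - a*b*q = 0
  · apply triv
    intro n
    rw [hh, hab]; simp
  have hr := rr_pos q a b hq hq1 ha0 haq hbq hab
  have hstep : ∀ n, h (n+1) = h n * rr q a b n := by
    intro n
    have b1 := abn_ne q a b hq hq1 ha0 haq hbq hab n
    have b2 := abn_ne q a b hq hq1 ha0 haq hbq hab (2*n)
    rw [hh, hh]
    simp only [qPoch_succ']
    unfold rr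
    rw [show q * q^n = q^(n+1) by ring, show b*q*q^n = b*q^(n+1) by ring,
      show a*q*q^n = a*q^(n+1) by ring, show a*b*q*q^n = a*b*q^(n+1) by ring,
      show 2*(n+1)+1 = 2*n+3 by ring, pow_succ (a*q) n]
    generalize 1 - a*b*q^(n+1) = X1 at *
    generalize 1 - a*b*q^(2*n+1) = X2 at *
    generalize 1 - a*b*q^(2*n+3) = X3 at *
    generalize 1 - a*q^(n+1) = X4 at *
    generalize qPochInf q (a * b * q ^ 2) / qPochInf q (a * q) = K
    have e : X2⁻¹ * X2 = 1 := inv_mul_cancel₀ b2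
    simp only [div_eq_mul_inv, mul_inv]
    linear_combination (-(K * (1 - a*b*q) * (a*q)^n * a*q * X3⁻¹ * qPoch q q n * (1-q^(n+1)) *
      qPoch q (b*q) n * (1-b*q^(n+1)) * (qPoch q (a*q) n)⁻¹ * X4⁻¹ * (qPoch q (a*b*q) n)⁻¹ * X1⁻¹)) * e
  rcases le_or_gt (h 0) 0 with h0 | h0
  · apply triv
    intro n
    induction n with
    | zero => exact h0
    | succ n ih => rw [hstep]; exact mul_nonpos_of_nonpos_of_nonneg ih (hr n).le
  have hpos : ∀ n, 0 < h n := by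
    intro n
    induction n with
    | zero => exact h0
    | succ n ih => rw [hstep]; exact mul_pos ih (hr n)
  have hs : ∀ n, Real.sqrt (h (n+1)) = Real.sqrt (h n) * Real.sqrt (rr q a b n) := by
    intro n; rw [hstep, Real.sqrt_mul (hpos n).le]
  have hsp : ∀ n, Real.sqrt (h n) ≠ 0 := fun n => (Real.sqrt_pos.2 (hpos n)).ne'
  have hrp : ∀ n, Real.sqrt (rr q a b n) ≠ 0 := fun n => (Real.sqrt_pos.2 (hr n)).ne'
  have hAk : ∀ n, A n = -((1 - a * c * q ^ (n + 1)) * (1 - b * q ^ (n + 1) / c)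
          / (1 - a * b * q ^ (2 * n + 2))) * (GG q a b n * Real.sqrt (rr q a b n)) := by
    intro n
    rw [hA, ← sqrt_key q a b hq hq1 ha0 haq hbq hab n]
    ring
  have hup : ∀ n x, A n * φ (n+1) x = -((1 - a * c * q ^ (n + 1)) * (1 - b * q ^ (n + 1) / c)
          / (1 - a * b * q ^ (2 * n + 2))) * GG q a b n * littleqJacobi q a b (n+1) x
            / Real.sqrt (h n) := by
    intro n x
    rw [hAk, hφ, hs]
    have i1 := hsp n
    have i2 := hrp n
    generalize Real.sqrt (rr q a b n) = s at *
    generalize Real.sqrt (h n) = t at *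
    rw [div_eq_mul_inv _ (t*s), mul_inv, div_eq_mul_inv _ t]
    have e : s * s⁻¹ = 1 := mul_inv_cancel₀ i2
    linear_combination (-((1 - a * c * q ^ (n + 1)) * (1 - b * q ^ (n + 1) / c)
          / (1 - a * b * q ^ (2 * n + 2))) * GG q a b n * littleqJacobi q a b (n+1) x * t⁻¹) * e
  have hdown : ∀ n x, A n * φ n x = -((1 - a * c * q ^ (n + 1)) * (1 - b * q ^ (n + 1) / c)
          / (1 - a * b * q ^ (2 * n + 2))) * (GG q a b n * rr q a b n) * littleqJacobi q a b n x
            / Real.sqrt (h (n+1)) := by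
    intro n x
    rw [hAk, hφ, hs]
    have i1 := hsp n
    have i2 := hrp n
    have i3 := Real.mul_self_sqrt (hr n).le
    generalize Real.sqrt (rr q a b n) = s at *
    generalize Real.sqrt (h n) = t at *
    rw [← i3, div_eq_mul_inv _ (t*s), mul_inv, div_eq_mul_inv _ t]
    have e : s * s⁻¹ = 1 := mul_inv_cancel₀ i2
    linear_combination (((1 - a * c * q ^ (n + 1)) * (1 - b * q ^ (n + 1) / c)
          / (1 - a * b * q ^ (2 * n + 2))) * GG q a b n * littleqJacobi q a b n x * t⁻¹ * s) * e
  intro n x _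
  cases n with
  | zero =>
    have P := p_rec0 q a b c hq hq1 ha0 haq hbq hc hab x _ rfl
    rw [← hγ] at P
    rw [hup, hB]
    simp only [hφ]
    have E1 : -((1 - a * c * q ^ (0 + 1)) * (1 - b * q ^ (0 + 1) / c)
          / (1 - a * b * q ^ (2 * 0 + 2))) * GG q a b 0 = -((1-a*c*q)*(1-b*q/c)*(1-a*q)*(1-a*b*q)
      /((1-a*b*q)*(1-a*b*q^2))) := by
      unfold GG
      simp only [zero_add, mul_zero, pow_one, div_eq_mul_inv, mul_inv]
      ring
    rw [E1]
    simp only [zero_add, mul_zero, pow_one, pow_zero, sub_self, zero_mul, zero_div, add_zero, if_true]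
    simp only [div_eq_mul_inv _ (Real.sqrt (h 0))]
    linear_combination (Real.sqrt (h 0))⁻¹ * P
  | succ m =>
    have P := p_rec q a b c hq hq1 ha0 haq hbq hc m x (m+1) rfl _ _ rfl rfl
    rw [← hγ] at P
    rw [if_neg (by omega), show m + 1 - 1 = m from rfl, hup, hdown, hB]
    simp only [hφ]
    have E1 : -((1 - a * c * q ^ (m+1 + 1)) * (1 - b * q ^ (m+1 + 1) / c)
          / (1 - a * b * q ^ (2 * (m+1) + 2))) * GG q a b (m+1)
        = -((1-a*c*(q^(m+1)*q))*(1-b*(q^(m+1)*q)/c)*(1-a*(q^(m+1)*q))*(1-a*b*(q^(m+1)*q))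
      /((1-a*b*((q^(m+1))^2*q))*(1-a*b*((q^(m+1))^2*q^2)))) := by
      unfold GG
      rw [show (q^(m+1))^2*q = q^(2*(m+1)+1) by ring,
        show (q^(m+1))^2*q^2 = q^(2*(m+1)+2) by ring, ← pow_succ]
      simp only [div_eq_mul_inv, mul_inv]
      ring
    have E2 : -((1 - a * c * q ^ (m + 1)) * (1 - b * q ^ (m + 1) / c)
          / (1 - a * b * q ^ (2 * m + 2))) * (GG q a b m * rr q a b m)
        = -(a*q*(1-q^(m+1))*(1-a*c*q^(m+1))*(1-b*q^(m+1))*(1-b*q^(m+1)/c)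
      /((1-a*b*(q^(m+1))^2)*(1-a*b*((q^(m+1))^2*q)))) := by
      unfold GG rr
      rw [show (q^(m+1))^2*q = q^(2*m+3) by ring,
        show (q^(m+1))^2 = q^(2*m+2) by ring]
      have b1 := abn_ne q a b hq hq1 ha0 haq hbq hab m
      have b2 := abn_ne q a b hq hq1 ha0 haq hbq hab (2*m)
      have b3 := abn_ne q a b hq hq1 ha0 haq hbq hab (2*m+2)
      have b5 := abn_ne q a b hq hq1 ha0 haq hbq hab (2*m+1)
      have b4 := (lt_pow q a hq hq1 haq m).ne'
      rw [show 2*m+2+1 = 2*m+3 from rfl] at b3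
      rw [show 2*m+1+1 = 2*m+2 from rfl] at b5
      generalize 1 - a*b*q^(m+1) = X1 at *
      generalize 1 - a*b*q^(2*m+1) = X2 at *
      generalize 1 - a*b*q^(2*m+3) = X3 at *
      generalize 1 - a*b*q^(2*m+2) = X5 at *
      generalize 1 - a*q^(m+1) = X4 at *
      field_simp
    rw [E1, E2]
    rw [show q^(2*(m+1)+1) = (q^(m+1))^2*q by ring,
        show q^(2*(m+1)+2) = (q^(m+1))^2*q^2 by ring,
        show q^(2*(m+1)) = (q^(m+1))^2 by ring, pow_succ q (m+1)]
    simp only [div_eq_mul_inv _ (Real.sqrt (h (m+1)))]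
    linear_combination (Real.sqrt (h (m+1)))⁻¹ * P
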